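/- arXiv:math/0312287 — 2 statements merged into one kernel-verified Lean document; each statement's English description precedes it below -/
import Mathlib

section
/- Let k ≥ 1. A tree with boundary G has the Faber-Krahn property in the class T^{(·,k)} of all trees with boundary with exactly k interior vertices (with arbitrary total number of vertices) if and only if G is a path with k+2 vertices, and G is then uniquely determined up to isomorphism. -/
/-!
Common definitions for Faber-Krahn type inequalities for trees
(Bıyıkoğlu–Leydold, "Faber-Krahn Type Inequalities for Trees").

A *tree (graph) with boundary* is a finite simple connected graph in which
boundary vertices are exactly the vertices of degree 1 and interior vertices
are the vertices of degree ≥ 2; both sets are required to be nonempty.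
The Dirichlet operator is the Laplacian restricted to functions vanishing on
the boundary; `dirichletLambda` is its smallest eigenvalue.
-/

open Finset
open scoped Classical

noncomputable section

namespace FK

variable {V : Type*} [Fintype V] [DecidableEq V]

/-- A vertex is a boundary vertex iff it has degree `1`. -/
def IsBoundary (G : SimpleGraph V) (v : V) : Prop := G.degree v = 1

/-- A vertex is an interior vertex iff it has degree at least `2`. -/
def IsInterior (G : SimpleGraph V) (v : V) : Prop := 2 ≤ G.degree v

/-- A tree with boundary: a tree with at least one interior and
one boundary vertex. -/
def IsTreeWithBoundary (G : SimpleGraph V) : Prop :=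
  G.IsTree ∧ (∃ v, IsInterior G v) ∧ (∃ v, IsBoundary G v)

/-- A connected graph with boundary: every vertex is either a boundary vertex
(degree 1) or an interior vertex (degree ≥ 2), both kinds occur, and no edge
joins two boundary vertices. -/
def IsGraphWithBoundary (G : SimpleGraph V) : Prop :=
  G.Connected ∧ (∀ v, IsBoundary G v ∨ IsInterior G v) ∧
    (∃ v, IsInterior G v) ∧ (∃ v, IsBoundary G v) ∧
    (∀ v w, G.Adj v w → IsBoundary G v → ¬ IsBoundary G w)

/-- The finset of interior vertices. -/
def interiorFinset (G : SimpleGraph V) : Finset V := univ.filter (fun v => IsInterior G v)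

/-- The finset of boundary vertices. -/
def boundaryFinset (G : SimpleGraph V) : Finset V := univ.filter (fun v => IsBoundary G v)

/-- The degree sequence of `G`, as a multiset. -/
def degreeMultiset (G : SimpleGraph V) : Multiset ℕ := Finset.univ.val.map (fun v => G.degree v)

/-- The graph Laplacian `Δ = D - A` applied to a function `f : V → ℝ`. -/
def lapApply (G : SimpleGraph V) (f : V → ℝ) (v : V) : ℝ :=
  (G.degree v : ℝ) * f v - ∑ w ∈ G.neighborFinset v, f w

/-- `f` (vanishing on the boundary, nonzero) is an eigenfunction of the
Dirichlet operator `Δ₀` with eigenvalue `μ`: the eigenvalue equation holds at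
every interior vertex. -/
def IsDirichletEigenpair (G : SimpleGraph V) (μ : ℝ) (f : V → ℝ) : Prop :=
  f ≠ 0 ∧ (∀ v, IsBoundary G v → f v = 0) ∧
    ∀ v, IsInterior G v → lapApply G f v = μ * f v

/-- The first (smallest) Dirichlet eigenvalue `λ(G)`. -/
def dirichletLambda (G : SimpleGraph V) : ℝ :=
  sInf {μ : ℝ | ∃ f : V → ℝ, IsDirichletEigenpair G μ f}

/-- The quadratic form `⟨Δ f, f⟩ = Σ_{(u,v)∈E} (f u - f v)²` of the Laplacian
(each edge counted once). -/
def quadForm (G : SimpleGraph V) (f : V → ℝ) : ℝ :=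
  (∑ v, ∑ w ∈ G.neighborFinset v, (f v - f w) ^ 2) / 2

/-- The Rayleigh quotient `R_G(f)`. -/
def rayleigh (G : SimpleGraph V) (f : V → ℝ) : ℝ :=
  quadForm G f / ∑ v, f v ^ 2

/-- `w` is a child of `v` in the tree `G` rooted at `v₀`
(heights are distances from the root `v₀`). -/
def IsChild (G : SimpleGraph V) (v₀ v w : V) : Prop :=
  G.Adj v w ∧ G.dist v₀ w = G.dist v₀ v + 1

/-- A spiral-like ordering (SLO-ordering) of the vertices of the tree `G`
rooted at `v₀`: a (strict) well-ordering `lt` satisfying (S1)-(S3). -/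
def IsSLOOrdering (G : SimpleGraph V) (v₀ : V) (lt : V → V → Prop) : Prop :=
  IsStrictTotalOrder V lt ∧
  (∀ v w, lt v w → G.dist v₀ v ≤ G.dist v₀ w) ∧
  (∀ v₁ v₂ w₁ w₂, lt v₁ v₂ → IsChild G v₀ v₁ w₁ → IsChild G v₀ v₂ w₂ → lt w₁ w₂) ∧
  (∀ v w, lt v w → IsBoundary G v → IsBoundary G w)

/-- A spiral-like ordering with increasing degrees (SLO*-ordering):
additionally (S4). -/
def IsSLOStarOrdering (G : SimpleGraph V) (v₀ : V) (lt : V → V → Prop) : Prop :=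
  IsSLOOrdering G v₀ lt ∧
  ∀ v w, lt v w → IsInterior G v → IsInterior G w → G.degree v ≤ G.degree w

/-- An SLO-tree: a tree with boundary admitting an SLO-ordering. -/
def IsSLOTree (G : SimpleGraph V) : Prop :=
  IsTreeWithBoundary G ∧ ∃ (v₀ : V) (lt : V → V → Prop), IsSLOOrdering G v₀ lt

/-- An SLO*-tree: a tree with boundary admitting an SLO*-ordering. -/
def IsSLOStarTree (G : SimpleGraph V) : Prop :=
  IsTreeWithBoundary G ∧ ∃ (v₀ : V) (lt : V → V → Prop), IsSLOStarOrdering G v₀ lt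

end FK

/-!
`dirichletLambda G` is the minimum of the Rayleigh quotient over functions vanishing on the
boundary, and it is attained by a function `f` that is positive on the interior. Remove the interior
vertices one by one in increasing order of `f`, subtracting the current minimum from `f` on the
remaining set `S` each time; on the path with `k + 2` vertices, place the same values at alternate
ends, going inwards. This keeps the `ℓ²` norm. Subtracting `c` on `S` lowers the energy of `f` by
`c ^ 2` times the number of edges leaving `S`, plus `2 * c` times the sum of the remaining values at
the inner ends of these edges. In a tree, `2 + ∑ v ∈ S, (deg v - 2)` edges or more leave `S`; an
interval of the path is left by exactly two. The second term on the path is `2 * c` times the next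
value to be removed, because the minimum just placed sits at one end of the interval, and in the
tree it is at least that, because some edge leaves `S` from a vertex other than the minimum. So the
path has the smaller eigenvalue, strictly unless all interior degrees of `G` are two.
-/
namespace FK

open SimpleGraph Matrix

section SpectralBound

variable {n : Type*} [Fintype n] [DecidableEq n] {A : Matrix n n ℝ} {c : ℝ}

lemma posSemidef_sub_smul_one_of_forall_le_spectrum (hA : A.IsHermitian)
    (hc : ∀ μ ∈ spectrum ℝ A, c ≤ μ) : (A - c • (1 : Matrix n n ℝ)).PosSemidef := by
  rw [posSemidef_iff_isHermitian_and_spectrum_nonneg, ← Algebra.algebraMap_eq_smul_one,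
    ← spectrum.sub_singleton_eq]
  refine ⟨hA.sub (by simp [algebraMap_eq_diagonal]), ?_⟩
  rintro _ ⟨μ, hμ, _, rfl, rfl⟩
  exact sub_nonneg.2 (hc μ hμ)

lemma sub_smul_one_mulVec (A : Matrix n n ℝ) (c : ℝ) (x : n → ℝ) :
    (A - c • (1 : Matrix n n ℝ)) *ᵥ x = A *ᵥ x - c • x := by
  rw [sub_mulVec, smul_mulVec, one_mulVec]

lemma mul_dotProduct_self_le_of_forall_le_spectrum (hA : A.IsHermitian)
    (hc : ∀ μ ∈ spectrum ℝ A, c ≤ μ) (x : n → ℝ) : c * (x ⬝ᵥ x) ≤ x ⬝ᵥ (A *ᵥ x) := by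
  have h := (posSemidef_sub_smul_one_of_forall_le_spectrum hA hc).dotProduct_mulVec_nonneg x
  rwa [star_trivial, sub_smul_one_mulVec, dotProduct_sub, dotProduct_smul, sub_nonneg] at h

lemma dotProduct_mulVec_eq_iff_of_forall_le_spectrum (hA : A.IsHermitian)
    (hc : ∀ μ ∈ spectrum ℝ A, c ≤ μ) {x : n → ℝ} :
    x ⬝ᵥ (A *ᵥ x) = c * (x ⬝ᵥ x) ↔ A *ᵥ x = c • x := by
  have h := (posSemidef_sub_smul_one_of_forall_le_spectrum hA hc).dotProduct_mulVec_zero_iff x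
  rwa [star_trivial, sub_smul_one_mulVec, dotProduct_sub, dotProduct_smul, sub_eq_zero,
    sub_eq_zero] at h

end SpectralBound

section Variational

variable {V : Type*} [Fintype V] {G : SimpleGraph V} {f : V → ℝ} {μ : ℝ}

lemma isBoundary_or_isInterior (hG : G.Connected) (hI : ∃ v, IsInterior G v) (v : V) :
    IsBoundary G v ∨ IsInterior G v := by
  obtain ⟨u, hu⟩ := hI
  obtain ⟨w, hw⟩ := (G.degree_pos_iff_exists_adj u).1 (two_pos.trans_le hu)
  have : Nontrivial V := ⟨u, w, hw.ne⟩
  have := hG.preconnected.degree_pos_of_nontrivial v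
  unfold IsBoundary IsInterior
  omega

lemma mem_interiorFinset {v : V} : v ∈ interiorFinset G ↔ IsInterior G v := mem_filter_univ v

lemma IsInterior.degree_sub_two_nonneg {v : V} (hv : IsInterior G v) :
    0 ≤ (G.degree v : ℝ) - 2 :=
  sub_nonneg.2 (Nat.ofNat_le_cast.2 hv)

lemma IsInterior.not_isBoundary {v : V} (hv : IsInterior G v) : ¬ IsBoundary G v := by
  unfold IsInterior at hv
  unfold IsBoundary
  omega

/-- The matrix of the Dirichlet operator `Δ₀`, indexed by the interior vertices. -/
def dirichletMatrix (G : SimpleGraph V) : Matrix {v // IsInterior G v} {v // IsInterior G v} ℝ :=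
  (G.lapMatrix ℝ).submatrix Subtype.val Subtype.val

lemma isHermitian_dirichletMatrix (G : SimpleGraph V) : (dirichletMatrix G).IsHermitian :=
  (G.isHermitian_lapMatrix ℝ).submatrix _

lemma lapApply_eq_lapMatrix_mulVec (G : SimpleGraph V) (f : V → ℝ) :
    lapApply G f = G.lapMatrix ℝ *ᵥ f :=
  funext fun v => (lapMatrix_mulVec_apply G v f).symm

lemma quadForm_eq_sum_mul_lapApply (G : SimpleGraph V) (f : V → ℝ) :
    quadForm G f = ∑ v, f v * lapApply G f v := by
  have h := lapMatrix_toLinearMap₂' ℝ G f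
  rw [toLinearMap₂'_apply', ← lapApply_eq_lapMatrix_mulVec] at h
  simp only [quadForm, neighborFinset_eq_filter, sum_filter]
  exact h.symm

lemma sum_interior_eq (hG : G.Connected) (hI : ∃ v, IsInterior G v) {g : V → ℝ}
    (hg : ∀ v, IsBoundary G v → g v = 0) :
    ∑ v : {v // IsInterior G v}, g v = ∑ v, g v := by
  rw [← Finset.sum_subtype (interiorFinset G) (fun _ => mem_interiorFinset)]
  exact Finset.sum_filter_of_ne fun v _ hv =>
    (isBoundary_or_isInterior hG hI v).resolve_left (mt (hg v) hv)

lemma dirichletMatrix_mulVec (hG : G.Connected) (hI : ∃ v, IsInterior G v)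
    (hf : ∀ v, IsBoundary G v → f v = 0) (v : {v // IsInterior G v}) :
    (dirichletMatrix G *ᵥ fun w => f w) v = lapApply G f v := by
  rw [lapApply_eq_lapMatrix_mulVec]
  exact sum_interior_eq hG hI (g := fun w => G.lapMatrix ℝ v w * f w) fun w hw => by
    rw [hf w hw, mul_zero]

lemma isDirichletEigenpair_iff (hG : G.Connected) (hI : ∃ v, IsInterior G v)
    (hf : ∀ v, IsBoundary G v → f v = 0) :
    IsDirichletEigenpair G μ f ↔
      Module.End.HasEigenvector (toLin' (dirichletMatrix G)) μ (fun w => f w) := by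
  rw [Module.End.hasEigenvector_iff, Module.End.mem_eigenspace_iff, toLin'_apply, funext_iff,
    ne_eq, funext_iff, IsDirichletEigenpair, ne_eq, funext_iff, and_comm]
  simp only [dirichletMatrix_mulVec hG hI hf, Subtype.forall, Pi.smul_apply, smul_eq_mul,
    Pi.zero_apply]
  refine ⟨fun h => ⟨h.1.2, fun h0 => h.2 fun v => ?_⟩, fun h => ⟨⟨hf, h.1⟩, fun h0 => h.2 ?_⟩⟩
  · exact (isBoundary_or_isInterior hG hI v).elim (hf v) (h0 v)
  · exact fun v _ => h0 v

lemma exists_isDirichletEigenpair_iff (hG : G.Connected) (hI : ∃ v, IsInterior G v) :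
    (∃ f, IsDirichletEigenpair G μ f) ↔ μ ∈ spectrum ℝ (dirichletMatrix G) := by
  rw [← spectrum_toLin', ← Module.End.hasEigenvalue_iff_mem_spectrum]
  constructor
  · rintro ⟨f, hf⟩
    exact Module.End.hasEigenvalue_of_hasEigenvector ((isDirichletEigenpair_iff hG hI hf.2.1).1 hf)
  · intro h
    obtain ⟨x, hx⟩ := h.exists_hasEigenvector
    have hx_ext :
        (fun w : {v // IsInterior G v} => Function.extend Subtype.val x (0 : V → ℝ) w) = x :=
      funext fun w => Subtype.val_injective.extend_apply x 0 w
    have hx_boundary : ∀ v, IsBoundary G v → Function.extend Subtype.val x (0 : V → ℝ) v = 0 :=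
      fun v hv => Function.extend_apply' _ _ _ fun ⟨w, hw⟩ => w.2.not_isBoundary (hw ▸ hv)
    refine ⟨_, (isDirichletEigenpair_iff hG hI hx_boundary).2 ?_⟩
    rwa [hx_ext]

lemma dirichletLambda_eq_sInf_spectrum (hG : G.Connected) (hI : ∃ v, IsInterior G v) :
    dirichletLambda G = sInf (spectrum ℝ (dirichletMatrix G)) :=
  congrArg sInf (Set.ext fun _ => exists_isDirichletEigenpair_iff hG hI)

lemma exists_isDirichletEigenpair_dirichletLambda (hG : G.Connected)
    (hI : ∃ v, IsInterior G v) : ∃ f, IsDirichletEigenpair G (dirichletLambda G) f := by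
  rw [exists_isDirichletEigenpair_iff hG hI, dirichletLambda_eq_sInf_spectrum hG hI]
  have : Nonempty {v // IsInterior G v} := nonempty_subtype.2 hI
  have hM := isHermitian_dirichletMatrix G
  exact Set.Nonempty.csInf_mem ⟨_, hM.eigenvalues_mem_spectrum_real (Classical.arbitrary _)⟩
    (finite_spectrum _)

lemma dirichletLambda_le_of_mem_spectrum (hG : G.Connected) (hI : ∃ v, IsInterior G v)
    (hμ : μ ∈ spectrum ℝ (dirichletMatrix G)) : dirichletLambda G ≤ μ := by
  rw [dirichletLambda_eq_sInf_spectrum hG hI]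
  exact csInf_le (finite_spectrum _).bddBelow hμ

lemma dotProduct_interior_self (hG : G.Connected) (hI : ∃ v, IsInterior G v)
    (hf : ∀ v, IsBoundary G v → f v = 0) :
    (fun w : {v // IsInterior G v} => f w) ⬝ᵥ (fun w => f w) = ∑ v, f v ^ 2 := by
  rw [← sum_interior_eq hG hI (g := fun v => f v ^ 2) fun v hv => by simp [hf v hv]]
  simp only [dotProduct, sq]

lemma dotProduct_dirichletMatrix_mulVec (hG : G.Connected) (hI : ∃ v, IsInterior G v)
    (hf : ∀ v, IsBoundary G v → f v = 0) :
    (fun w : {v // IsInterior G v} => f w) ⬝ᵥ (dirichletMatrix G *ᵥ fun w => f w) =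
      quadForm G f := by
  rw [quadForm_eq_sum_mul_lapApply,
    ← sum_interior_eq hG hI (g := fun v => f v * lapApply G f v) fun v hv => by simp [hf v hv]]
  simp only [dotProduct, dirichletMatrix_mulVec hG hI hf]

lemma dirichletLambda_mul_le_quadForm (hG : G.Connected) (hI : ∃ v, IsInterior G v)
    (hf : ∀ v, IsBoundary G v → f v = 0) :
    dirichletLambda G * ∑ v, f v ^ 2 ≤ quadForm G f := by
  rw [← dotProduct_interior_self hG hI hf, ← dotProduct_dirichletMatrix_mulVec hG hI hf]
  exact mul_dotProduct_self_le_of_forall_le_spectrum (isHermitian_dirichletMatrix G)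
    (fun _ => dirichletLambda_le_of_mem_spectrum hG hI) _

lemma isDirichletEigenpair_dirichletLambda_iff (hG : G.Connected) (hI : ∃ v, IsInterior G v)
    (hf₀ : f ≠ 0) (hf : ∀ v, IsBoundary G v → f v = 0) :
    IsDirichletEigenpair G (dirichletLambda G) f ↔
      quadForm G f = dirichletLambda G * ∑ v, f v ^ 2 := by
  rw [← dotProduct_interior_self hG hI hf, ← dotProduct_dirichletMatrix_mulVec hG hI hf,
    dotProduct_mulVec_eq_iff_of_forall_le_spectrum (isHermitian_dirichletMatrix G)
      fun _ => dirichletLambda_le_of_mem_spectrum hG hI, funext_iff]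
  simp only [dirichletMatrix_mulVec hG hI hf, Subtype.forall, Pi.smul_apply, smul_eq_mul]
  exact ⟨fun h => h.2.2, fun h => ⟨hf₀, hf, h⟩⟩

end Variational

section PositiveEigenfunction

variable {V : Type*} [Fintype V] {G : SimpleGraph V} {f : V → ℝ} {μ : ℝ}

lemma quadForm_abs_le (G : SimpleGraph V) (f : V → ℝ) : quadForm G |f| ≤ quadForm G f := by
  refine div_le_div_of_nonneg_right (sum_le_sum fun v _ => sum_le_sum fun w _ => ?_) two_pos.le
  exact sq_le_sq.2 (abs_abs_sub_abs_le (f v) (f w))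

lemma IsDirichletEigenpair.abs (hG : G.Connected) (hI : ∃ v, IsInterior G v)
    (hf : IsDirichletEigenpair G (dirichletLambda G) f) :
    IsDirichletEigenpair G (dirichletLambda G) |f| := by
  have hf_boundary : ∀ v, IsBoundary G v → |f| v = 0 := fun v hv => by simp [hf.2.1 v hv]
  have hf_abs : |f| ≠ 0 := fun h => hf.1 (funext fun v => abs_eq_zero.1 (congrFun h v))
  have hsum : ∑ v, |f| v ^ 2 = ∑ v, f v ^ 2 := by simp
  rw [isDirichletEigenpair_dirichletLambda_iff hG hI hf_abs hf_boundary, hsum]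
  refine le_antisymm ?_ (hsum ▸ dirichletLambda_mul_le_quadForm hG hI hf_boundary)
  exact (quadForm_abs_le G f).trans_eq
    ((isDirichletEigenpair_dirichletLambda_iff hG hI hf.1 hf.2.1).1 hf)

lemma IsDirichletEigenpair.eq_zero_of_adj (hf : IsDirichletEigenpair G μ f) (hf₀ : 0 ≤ f)
    {v w : V} (hv : IsInterior G v) (hfv : f v = 0) (hvw : G.Adj v w) : f w = 0 := by
  have h := hf.2.2 v hv
  rw [lapApply, hfv, mul_zero, mul_zero, zero_sub, neg_eq_zero,
    sum_eq_zero_iff_of_nonneg fun u _ => hf₀ u] at h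
  exact h w ((G.mem_neighborFinset v w).2 hvw)

lemma preconnected_induce_interior (hG : G.Connected) (hI : ∃ v, IsInterior G v) :
    (G.induce {v | IsInterior G v}).Preconnected := by
  refine hG.preconnected.induce_of_degree_eq_one fun v hv => ?_
  obtain ⟨w, hw⟩ := degree_eq_one_iff_existsUnique_adj.1
    ((isBoundary_or_isInterior hG hI v).resolve_right hv)
  exact fun x hx y hy => (hw.2 x hx).trans (hw.2 y hy).symm

lemma IsDirichletEigenpair.pos_of_nonneg (hG : G.Connected) (hI : ∃ v, IsInterior G v)
    (hf : IsDirichletEigenpair G μ f) (hf₀ : 0 ≤ f) {v : V} (hv : IsInterior G v) : 0 < f v := by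
  refine (hf₀ v).lt_of_ne' fun hfv => hf.1 ?_
  have h_interior : ∀ w : {v | IsInterior G v}, f w = 0 := by
    intro w
    obtain ⟨p⟩ := preconnected_induce_interior hG hI ⟨v, hv⟩ w
    suffices ∀ {x y : {v | IsInterior G v}}, (G.induce {v | IsInterior G v}).Walk x y →
      f x = 0 → f y = 0 from this p hfv
    intro x y p hx
    induction p with
    | nil => exact hx
    | cons h _ ih => exact ih (hf.eq_zero_of_adj hf₀ (Subtype.prop _) hx h)
  exact funext fun w => (isBoundary_or_isInterior hG hI w).elim (hf.2.1 w) fun hw =>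
    h_interior ⟨w, hw⟩

lemma exists_pos_isDirichletEigenpair_dirichletLambda (hG : G.Connected)
    (hI : ∃ v, IsInterior G v) :
    ∃ f, IsDirichletEigenpair G (dirichletLambda G) f ∧ ∀ v, IsInterior G v → 0 < f v := by
  obtain ⟨f, hf⟩ := exists_isDirichletEigenpair_dirichletLambda hG hI
  have hf' := hf.abs hG hI
  exact ⟨|f|, hf', fun _ => hf'.pos_of_nonneg hG hI (abs_nonneg f)⟩

end PositiveEigenfunction

section EdgeCut

variable {V : Type*} [Fintype V] {G : SimpleGraph V} {S : Finset V}

lemma card_edgeFinset_lt_of_isAcyclic [Nonempty V] [Fintype G.edgeSet] (hG : G.IsAcyclic) :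
    #G.edgeFinset < Fintype.card V := by
  obtain ⟨T, hGT, -, hT⟩ := connected_top.exists_isTree_le_of_le_of_isAcyclic le_top hG
  rw [← hT.card_edgeFinset, Nat.lt_succ_iff]
  exact card_le_card (edgeFinset_mono hGT)

/-- The number of edges joining `v` to a vertex outside `S`. For `v ∈ S`, these are the edges at `v`
in the edge cut between `S` and its complement. -/
def outDegree (G : SimpleGraph V) (S : Finset V) (v : V) : ℕ := #(G.neighborFinset v \ S)

lemma degree_induce_add_outDegree (G : SimpleGraph V) (S : Finset V) (v : (S : Set V)) :
    (G.induce (S : Set V)).degree v + outDegree G S v = G.degree v := by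
  have h : (G.induce (S : Set V)).degree v = #(G.neighborFinset v ∩ S) := by
    rw [← card_neighborFinset_eq_degree, ← card_map (.subtype (· ∈ (S : Set V)))]
    congr 1
    ext
    simp
  rw [h, outDegree, card_inter_add_card_sdiff, card_neighborFinset_eq_degree]

lemma sum_degree_add_two_le_sum_outDegree_add (hG : G.IsAcyclic) (hS : S.Nonempty) :
    ∑ v ∈ S, G.degree v + 2 ≤ ∑ v ∈ S, outDegree G S v + 2 * #S := by
  have : Nonempty (S : Set V) := hS.to_subtype
  have h_edges := card_edgeFinset_lt_of_isAcyclic (hG.induce (S : Set V))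
  have h_handshake := sum_degrees_eq_twice_card_edges (G.induce (S : Set V))
  have h_degree : ∑ v, (G.induce (S : Set V)).degree v + ∑ v ∈ S, outDegree G S v =
      ∑ v ∈ S, G.degree v := by
    rw [← toFinset_coe S, ← sum_set_coe, ← sum_set_coe, toFinset_coe, ← sum_add_distrib]
    exact sum_congr rfl fun v _ => degree_induce_add_outDegree G S v
  rw [← Set.toFinset_card, toFinset_coe] at h_edges
  omega

lemma two_add_sum_degree_sub_two_le_sum_outDegree (hG : G.IsAcyclic) (hS : S.Nonempty) :
    2 + ∑ v ∈ S, ((G.degree v : ℝ) - 2) ≤ ∑ v ∈ S, (outDegree G S v : ℝ) := by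
  have h : ((∑ v ∈ S, G.degree v + 2 : ℕ) : ℝ) ≤ (∑ v ∈ S, outDegree G S v + 2 * #S : ℕ) :=
    Nat.cast_le.2 (sum_degree_add_two_le_sum_outDegree_add hG hS)
  push_cast at h
  rw [sum_sub_distrib, sum_const, nsmul_eq_mul]
  linarith

lemma outDegree_eq_zero_iff {v : V} : outDegree G S v = 0 ↔ ∀ w, G.Adj v w → w ∈ S := by
  simp [outDegree, subset_iff]

lemma exists_outDegree_pos_of_nonempty (hG : G.IsAcyclic) (hS : ∀ v ∈ S, IsInterior G v)
    (hne : S.Nonempty) : ∃ v ∈ S, 0 < outDegree G S v := by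
  by_contra! h
  have h_sum := sum_degree_add_two_le_sum_outDegree_add hG hne
  have h_degree : #S * 2 ≤ ∑ v ∈ S, G.degree v := card_nsmul_le_sum S _ 2 hS
  have h_out : ∑ v ∈ S, outDegree G S v ≤ 0 := sum_nonpos h
  omega

lemma exists_outDegree_pos_erase (hG : G.IsAcyclic) (hS : ∀ v ∈ S, IsInterior G v) {r : V}
    (hr : r ∈ S) (hSr : (S.erase r).Nonempty) : ∃ v ∈ S.erase r, 0 < outDegree G S v := by
  by_contra! h_out
  have hS_erase : ∀ v ∈ S.erase r, IsInterior G v := fun v hv => hS v (mem_of_mem_erase hv)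
  have hr_degree : G.degree r ≤ outDegree G S r := by
    have h_sum := sum_degree_add_two_le_sum_outDegree_add hG ⟨r, hr⟩
    have h_degree : #(S.erase r) * 2 ≤ ∑ v ∈ S.erase r, G.degree v :=
      card_nsmul_le_sum _ _ 2 hS_erase
    rw [← add_sum_erase S _ hr, ← add_sum_erase S _ hr, sum_eq_zero fun v hv =>
      Nat.le_zero.1 (h_out v hv), ← card_erase_add_one hr] at h_sum
    omega
  have hr_adj : ∀ w, G.Adj r w → w ∉ S := by
    intro w hw hwS
    have h_eq : G.neighborFinset r \ S = G.neighborFinset r :=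
      eq_of_subset_of_card_le sdiff_subset hr_degree
    exact (mem_sdiff.1 (h_eq ▸ (G.mem_neighborFinset r w).2 hw)).2 hwS
  obtain ⟨v, hv, hv_out⟩ := exists_outDegree_pos_of_nonempty hG hS_erase hSr
  refine hv_out.ne' (outDegree_eq_zero_iff.2 fun w hw => mem_erase.2 ⟨?_, ?_⟩)
  · rintro rfl
    exact hr_adj v hw.symm (mem_of_mem_erase hv)
  · exact outDegree_eq_zero_iff.1 (Nat.le_zero.1 (h_out v hv)) w hw

end EdgeCut

section Peeling

variable {V : Type*} [Fintype V] {G : SimpleGraph V} {S : Finset V} {g : V → ℝ}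

lemma quadForm_add (G : SimpleGraph V) (g h : V → ℝ) :
    quadForm G (g + h) = quadForm G g + quadForm G h + 2 * ∑ v, g v * lapApply G h v := by
  have h_symm : h ⬝ᵥ (G.lapMatrix ℝ *ᵥ g) = g ⬝ᵥ (G.lapMatrix ℝ *ᵥ h) := by
    rw [dotProduct_mulVec, ← mulVec_transpose, (G.isSymm_lapMatrix (R := ℝ)).eq, dotProduct_comm]
  have h_dot : ∀ f, quadForm G f = f ⬝ᵥ (G.lapMatrix ℝ *ᵥ f) := fun f => by
    rw [quadForm_eq_sum_mul_lapApply, lapApply_eq_lapMatrix_mulVec]; rfl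
  have h_cross : ∑ v, g v * lapApply G h v = g ⬝ᵥ (G.lapMatrix ℝ *ᵥ h) := by
    rw [lapApply_eq_lapMatrix_mulVec]; rfl
  rw [h_dot, h_dot, h_dot, h_cross, mulVec_add, dotProduct_add, add_dotProduct, add_dotProduct,
    h_symm]
  ring

lemma lapApply_indicator_const (c : ℝ) {v : V} (hv : v ∈ S) :
    lapApply G ((S : Set V).indicator fun _ => c) v = c * outDegree G S v := by
  have h_sum : ∑ w ∈ G.neighborFinset v, (S : Set V).indicator (fun _ => c) w =
      #(G.neighborFinset v ∩ S) * c := by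
    simp [Set.indicator_apply, sum_ite_mem]
  have h_card : (#(G.neighborFinset v ∩ S) : ℝ) + outDegree G S v = G.degree v := by
    rw [outDegree, ← Nat.cast_add, card_inter_add_card_sdiff, card_neighborFinset_eq_degree]
  rw [lapApply, h_sum, Set.indicator_of_mem (mem_coe.2 hv), ← h_card]
  ring

lemma sum_mul_lapApply_indicator_const (hg : ∀ v ∉ S, g v = 0) (c : ℝ) :
    ∑ v, g v * lapApply G ((S : Set V).indicator fun _ => c) v =
      c * ∑ v ∈ S, outDegree G S v * g v := by
  rw [← sum_subset (subset_univ S) fun v _ hv => by rw [hg v hv, zero_mul], mul_sum]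
  refine sum_congr rfl fun v hv => ?_
  rw [lapApply_indicator_const c hv]
  ring

lemma quadForm_add_indicator_const (hg : ∀ v ∉ S, g v = 0) (c : ℝ) :
    quadForm G (g + (S : Set V).indicator fun _ => c) =
      quadForm G g + c ^ 2 * ∑ v ∈ S, (outDegree G S v : ℝ) +
        2 * c * ∑ v ∈ S, outDegree G S v * g v := by
  have h_indicator : quadForm G ((S : Set V).indicator fun _ => c) =
      c ^ 2 * ∑ v ∈ S, (outDegree G S v : ℝ) := by
    rw [quadForm_eq_sum_mul_lapApply, sum_mul_lapApply_indicator_const (S := S)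
      (fun v hv => Set.indicator_of_notMem (mem_coe.not.2 hv) _), sq, mul_assoc]
    congr 1
    rw [mul_sum]
    refine sum_congr rfl fun v hv => ?_
    rw [Set.indicator_of_mem (mem_coe.2 hv), mul_comm]
  rw [quadForm_add, h_indicator, sum_mul_lapApply_indicator_const hg]
  ring

lemma le_sum_outDegree_mul (hG : G.IsAcyclic) (hS : ∀ v ∈ S, IsInterior G v) {r : V}
    (hr : r ∈ S) (hSr : (S.erase r).Nonempty) (hg : 0 ≤ g) {b : ℝ}
    (hb : ∀ v ∈ S.erase r, b ≤ g v) : b ≤ ∑ v ∈ S, outDegree G S v * g v := by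
  obtain ⟨v, hv, hv_out⟩ := exists_outDegree_pos_erase hG hS hr hSr
  calc b ≤ g v := hb v hv
    _ ≤ outDegree G S v * g v := le_mul_of_one_le_left (hg v) (Nat.one_le_cast.2 hv_out)
    _ ≤ ∑ v ∈ S, outDegree G S v * g v :=
      single_le_sum (f := fun v => outDegree G S v * g v)
        (fun u _ => mul_nonneg (Nat.cast_nonneg _) (hg u)) (mem_of_mem_erase hv)

end Peeling

section Rearrangement

/-- The Dirichlet energy of the sequence `a 0, …, a n`, seen as a function on a path with `n`
edges. -/
def pathEnergy (n : ℕ) (a : ℕ → ℝ) : ℝ := ∑ i ∈ range n, (a (i + 1) - a i) ^ 2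

/-- `a` lists the values of `f` on `S` (with multiplicity) at the places `1, …, #S`, and vanishes at
`0` and at `#S + 1`. The equality of multisets is expressed by summing an arbitrary function. -/
def IsRearrangement {V : Type*} (S : Finset V) (f : V → ℝ) (a : ℕ → ℝ) : Prop :=
  a 0 = 0 ∧ a (#S + 1) = 0 ∧ ∀ φ : ℝ → ℝ, ∑ i ∈ range #S, φ (a (i + 1)) = ∑ v ∈ S, φ (f v)

/-- The reflection of `a` about the middle of `1, …, n + 1`, raised by `c` and extended by zero to
`0` and `n + 2`. If `a` lists its values in increasing order from one end, the new smallest value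
`c` is put at the opposite end: iterating this yields the spiral arrangement on the path. -/
def reflectAdd (n : ℕ) (c : ℝ) (a : ℕ → ℝ) (i : ℕ) : ℝ :=
  if i = 0 ∨ i = n + 2 then 0 else c + a (n + 2 - i)

variable {n : ℕ} {a : ℕ → ℝ}

lemma pathEnergy_reflectAdd (h₀ : a 0 = 0) (hn : a (n + 1) = 0) (c : ℝ) :
    pathEnergy (n + 2) (reflectAdd n c a) = pathEnergy (n + 1) a + 2 * c ^ 2 + 2 * c * a 1 := by
  have h_inner : ∑ i ∈ range n, (reflectAdd n c a (i + 1 + 1) - reflectAdd n c a (i + 1)) ^ 2 =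
      ∑ i ∈ range n, (a (i + 1 + 1) - a (i + 1)) ^ 2 := by
    rw [← sum_range_reflect fun i => (a (i + 1 + 1) - a (i + 1)) ^ 2]
    refine sum_congr rfl fun i hi => ?_
    have hin := mem_range.1 hi
    have e₁ : n + 2 - (i + 1 + 1) = n - 1 - i + 1 := by omega
    have e₂ : n + 2 - (i + 1) = n - 1 - i + 1 + 1 := by omega
    rw [reflectAdd, reflectAdd, if_neg (by omega), if_neg (by omega), e₁, e₂]
    ring
  have h_first : reflectAdd n c a (0 + 1) - reflectAdd n c a 0 = c := by simp [reflectAdd, hn]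
  have h_last : reflectAdd n c a (n + 1 + 1) - reflectAdd n c a (n + 1) = -(c + a 1) := by
    simp [reflectAdd]
  rw [pathEnergy, pathEnergy, sum_range_succ, sum_range_succ', sum_range_succ', h_inner, h_first,
    h_last, h₀]
  ring

lemma IsRearrangement.reflectAdd {V : Type*} {S : Finset V} {f g : V → ℝ} {r : V}
    (hr : r ∈ S) (hfg : ∀ v ∈ S.erase r, f v = g v + f r) (ha : IsRearrangement (S.erase r) g a) :
    IsRearrangement S f (reflectAdd #(S.erase r) (f r) a) := by
  obtain ⟨-, ha_end, ha_sum⟩ := ha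
  have h_card : #S = #(S.erase r) + 1 := (card_erase_add_one hr).symm
  refine ⟨by simp [FK.reflectAdd], by simp [FK.reflectAdd, h_card], fun φ => ?_⟩
  rw [h_card, sum_range_succ', ← add_sum_erase S _ hr, add_comm]
  congr 1
  · simp [FK.reflectAdd, ha_end]
  · rw [sum_congr rfl fun v hv => congrArg φ (hfg v hv), ← ha_sum fun x => φ (x + f r),
      ← sum_range_reflect]
    refine sum_congr rfl fun i hi => ?_
    have hin := mem_range.1 hi
    rw [FK.reflectAdd, if_neg (by omega), add_comm (f r)]
    congr 3
    omega

lemma indicator_sub_const_add_indicator_const {V : Type*} {S : Finset V} {f : V → ℝ}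
    (hf : ∀ v ∉ S, f v = 0) (c : ℝ) :
    ((S : Set V).indicator fun v => f v - c) + (S : Set V).indicator (fun _ => c) = f := by
  rw [← Set.indicator_add', show ((fun v => f v - c) + fun _ => c) = f by ext; simp,
    Set.indicator_eq_self.2 fun v hv => by_contra fun h => hv (hf v h)]

variable {V : Type*} [Fintype V] {G : SimpleGraph V} {S : Finset V} {f g : V → ℝ}

lemma pathEnergy_reflectAdd_add_le (hG : G.IsAcyclic) (hS : ∀ v ∈ S, IsInterior G v) {r : V}
    (hr : r ∈ S) {c : ℝ} (hc : 0 ≤ c) (hg : 0 ≤ g) (hg_out : ∀ v ∉ S, g v = 0)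
    (ha : IsRearrangement (S.erase r) g a) (ha_le : ∀ v ∈ S.erase r, a 1 ≤ g v)
    (ha_energy : pathEnergy (#(S.erase r) + 1) a ≤ quadForm G g) :
    pathEnergy (#S + 1) (reflectAdd #(S.erase r) c a) + c ^ 2 * ∑ v ∈ S, ((G.degree v : ℝ) - 2) ≤
      quadForm G (g + (S : Set V).indicator fun _ => c) := by
  have h_out : a 1 ≤ ∑ v ∈ S, outDegree G S v * g v := by
    rcases (S.erase r).eq_empty_or_nonempty with h_empty | h_nonempty
    · have ha_one : a 1 = 0 := by simpa [h_empty] using ha.2.1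
      rw [ha_one]
      exact sum_nonneg fun v _ => mul_nonneg (Nat.cast_nonneg _) (hg v)
    · exact le_sum_outDegree_mul hG hS hr h_nonempty hg ha_le
  have h_cut := two_add_sum_degree_sub_two_le_sum_outDegree hG ⟨r, hr⟩
  rw [← card_erase_add_one hr, pathEnergy_reflectAdd ha.1 ha.2.1,
    quadForm_add_indicator_const hg_out]
  linear_combination ha_energy + c ^ 2 * h_cut + 2 * c * h_out

lemma exists_isRearrangement_pathEnergy_add_le (hG : G.IsAcyclic) (hS : ∀ v ∈ S, IsInterior G v)
    (hf : 0 ≤ f) (hf_out : ∀ v ∉ S, f v = 0) :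
    ∃ a, IsRearrangement S f a ∧ (S.Nonempty → IsLeast (f '' S) (a 1)) ∧
      pathEnergy (#S + 1) a + a 1 ^ 2 * ∑ v ∈ S, ((G.degree v : ℝ) - 2) ≤ quadForm G f := by
  induction S using Finset.strongInduction generalizing f with
  | H S ih =>
    rcases S.eq_empty_or_nonempty with rfl | hS_nonempty
    · refine ⟨0, by simp [IsRearrangement], by simp, ?_⟩
      have hf_zero : f = 0 := funext fun v => hf_out v (notMem_empty v)
      simp [pathEnergy, quadForm, hf_zero]
    obtain ⟨r, hr, hr_min⟩ := exists_min_image S f hS_nonempty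
    let g : V → ℝ := (S : Set V).indicator fun v => f v - f r
    have hg_mem : ∀ v ∈ S, g v = f v - f r := fun v hv => Set.indicator_of_mem (mem_coe.2 hv) _
    have hg : 0 ≤ g := Set.indicator_nonneg fun v hv => sub_nonneg.2 (hr_min v hv)
    have hg_out : ∀ v ∉ S, g v = 0 := fun v hv => Set.indicator_of_notMem (mem_coe.not.2 hv) _
    have hg_erase : ∀ v ∉ S.erase r, g v = 0 := by
      intro v hv
      by_cases hvS : v ∈ S
      · rw [hg_mem v hvS, by_contra fun hvr => hv (mem_erase.2 ⟨hvr, hvS⟩), sub_self]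
      · exact hg_out v hvS
    obtain ⟨a, ha, ha_least, ha_energy⟩ := ih _ (erase_ssubset hr)
      (fun v hv => hS v (mem_of_mem_erase hv)) hg hg_erase
    have ha_le : ∀ v ∈ S.erase r, a 1 ≤ g v := fun v hv =>
      (ha_least ⟨v, hv⟩).2 (Set.mem_image_of_mem g hv)
    have h_excess : 0 ≤ a 1 ^ 2 * ∑ v ∈ S.erase r, ((G.degree v : ℝ) - 2) :=
      mul_nonneg (sq_nonneg _) <| sum_nonneg fun v hv =>
        (hS v (mem_of_mem_erase hv)).degree_sub_two_nonneg
    have ha_one : reflectAdd #(S.erase r) (f r) a 1 = f r := by simp [reflectAdd, ha.2.1]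
    refine ⟨reflectAdd #(S.erase r) (f r) a, .reflectAdd hr (fun v hv => ?_) ha, fun _ => ?_, ?_⟩
    · rw [hg_mem v (mem_of_mem_erase hv), sub_add_cancel]
    · rw [ha_one]
      exact ⟨Set.mem_image_of_mem f hr, Set.forall_mem_image.2 hr_min⟩
    · have hf_eq : g + (S : Set V).indicator (fun _ => f r) = f :=
        indicator_sub_const_add_indicator_const hf_out (f r)
      have h_energy := pathEnergy_reflectAdd_add_le hG hS hr (hf r) hg hg_out ha ha_le
        (by linarith)
      rw [ha_one]
      rwa [hf_eq] at h_energy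

end Rearrangement

section PathGraph

lemma quadForm_pathGraph (n : ℕ) (a : ℕ → ℝ) :
    quadForm (pathGraph (n + 1)) (fun i => a i) = pathEnergy n a := by
  have h_up : ∑ i : Fin (n + 1), ∑ j : Fin (n + 1),
      (if (i : ℕ) + 1 = j then (a i - a j) ^ 2 else 0) = pathEnergy n a := by
    rw [Fin.sum_univ_castSucc, sum_eq_zero fun j _ => if_neg (by simp; omega), add_zero,
      pathEnergy, ← Fin.sum_univ_eq_sum_range]
    refine sum_congr rfl fun i _ => ?_
    rw [Fintype.sum_eq_single i.succ fun j hj => if_neg fun h => hj (Fin.ext (by simp [← h])),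
      if_pos (by simp)]
    simp only [Fin.val_castSucc, Fin.val_succ]
    ring
  have h_split : ∀ i j : Fin (n + 1),
      (if (pathGraph (n + 1)).Adj i j then (a i - a j) ^ 2 else 0) =
        (if (i : ℕ) + 1 = j then (a i - a j) ^ 2 else 0) +
          if (j : ℕ) + 1 = i then (a j - a i) ^ 2 else 0 := by
    intro i j
    rw [sub_sq_comm (a j)]
    grind [pathGraph_adj]
  simp only [quadForm, neighborFinset_eq_filter, sum_filter, h_split, sum_add_distrib]
  rw [sum_comm (f := fun i j : Fin (n + 1) => if (j : ℕ) + 1 = i then (a j - a i) ^ 2 else 0), h_up,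
    add_self_div_two]

variable {k : ℕ} {i : Fin (k + 2)}

lemma degree_pathGraph_of_pos_of_lt (h₀ : 0 < i.val) (hk : i.val < k + 1) :
    (pathGraph (k + 2)).degree i = 2 := by
  have h_nbrs : (pathGraph (k + 2)).neighborFinset i =
      {⟨i.val - 1, by omega⟩, ⟨i.val + 1, by omega⟩} := by
    ext j
    simp only [mem_neighborFinset, pathGraph_adj, mem_insert, mem_singleton, Fin.ext_iff]
    omega
  rw [← card_neighborFinset_eq_degree, h_nbrs, card_pair]
  simp only [ne_eq, Fin.ext_iff]
  omega

lemma degree_pathGraph_of_eq_or_eq (h : i.val = 0 ∨ i.val = k + 1) :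
    (pathGraph (k + 2)).degree i = 1 := by
  rw [← card_neighborFinset_eq_degree, card_eq_one]
  refine ⟨if i.val = 0 then ⟨1, by omega⟩ else ⟨k, by omega⟩, ?_⟩
  ext j
  rw [mem_neighborFinset, pathGraph_adj, mem_singleton]
  split_ifs <;> rw [Fin.ext_iff] <;> dsimp only <;> omega

lemma isInterior_pathGraph_iff : IsInterior (pathGraph (k + 2)) i ↔ 0 < i.val ∧ i.val < k + 1 := by
  by_cases h : 0 < i.val ∧ i.val < k + 1
  · exact iff_of_true (degree_pathGraph_of_pos_of_lt h.1 h.2).ge h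
  · refine iff_of_false (fun h_int => ?_) h
    rw [IsInterior, degree_pathGraph_of_eq_or_eq (by omega)] at h_int
    omega

lemma card_interiorFinset_pathGraph (k : ℕ) : #(interiorFinset (pathGraph (k + 2))) = k := by
  have h_eq : interiorFinset (pathGraph (k + 2)) = Ioo (0 : Fin (k + 2)) (Fin.last (k + 1)) := by
    ext i
    rw [mem_interiorFinset, isInterior_pathGraph_iff, mem_Ioo]
    rfl
  rw [h_eq, Fin.card_Ioo]
  simp

lemma sum_degree_eq_card_add_card_interiorFinset {V : Type*} [Fintype V] {G : SimpleGraph V}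
    (hB : ∀ v, IsBoundary G v ∨ IsInterior G v) (h : ∀ v, IsInterior G v → G.degree v = 2) :
    ∑ v, G.degree v = Fintype.card V + #(interiorFinset G) := by
  have h_degree : ∀ v, G.degree v = 1 + if IsInterior G v then 1 else 0 := by
    intro v
    split_ifs with hv
    · exact h v hv
    · exact (hB v).resolve_right hv
  rw [sum_congr rfl fun v _ => h_degree v, sum_add_distrib, sum_boole]
  simp [interiorFinset]

lemma isTreeWithBoundary_pathGraph (hk : 1 ≤ k) : IsTreeWithBoundary (pathGraph (k + 2)) := by
  have h_boundary : ∀ i, IsBoundary (pathGraph (k + 2)) i ∨ IsInterior (pathGraph (k + 2)) i := by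
    intro i
    rw [isInterior_pathGraph_iff, or_iff_not_imp_right]
    exact fun h => degree_pathGraph_of_eq_or_eq (by omega)
  have h_degree : ∀ i, IsInterior (pathGraph (k + 2)) i → (pathGraph (k + 2)).degree i = 2 := by
    intro i hi
    rw [isInterior_pathGraph_iff] at hi
    exact degree_pathGraph_of_pos_of_lt hi.1 hi.2
  have h_sum := sum_degree_eq_card_add_card_interiorFinset h_boundary h_degree
  rw [sum_degrees_eq_twice_card_edges, card_interiorFinset_pathGraph, Fintype.card_fin] at h_sum
  refine ⟨isTree_iff_connected_and_card.2 ⟨pathGraph_connected _, ?_⟩,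
    ⟨⟨1, by omega⟩, isInterior_pathGraph_iff.2 ⟨Nat.one_pos, Nat.lt_succ_of_le hk⟩⟩,
    ⟨0, degree_pathGraph_of_eq_or_eq (Or.inl rfl)⟩⟩
  rw [Nat.card_eq_fintype_card, ← edgeFinset_card, Nat.card_fin]
  omega

end PathGraph

section Recognition

variable {V : Type*} {G : SimpleGraph V} {r v w : V}

lemma exists_adj_dist_eq_add_one (hG : G.Connected) (hv : v ≠ r) :
    ∃ u, G.Adj v u ∧ G.dist r v = G.dist r u + 1 := by
  obtain ⟨p, hp⟩ := hG.exists_walk_length_eq_dist v r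
  cases p with
  | nil => exact absurd rfl hv
  | @cons _ u _ h_adj q =>
    rw [Walk.length_cons] at hp
    have h_le := dist_le q
    have h_diff := h_adj.diff_dist_adj (u := r)
    rw [dist_comm (v := r)] at hp h_le
    exact ⟨u, h_adj, by omega⟩

lemma dist_injective_of_degree_le_two [Fintype V] (hG : G.Connected) (h_two : ∀ v, G.degree v ≤ 2)
    (hr : G.degree r ≤ 1) : Function.Injective (G.dist r) := by
  intro v w hvw
  induction hd : G.dist r v generalizing v w with
  | zero =>
    exact (hG.dist_eq_zero_iff.1 hd).symm.trans (hG.dist_eq_zero_iff.1 (hvw.symm.trans hd))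
  | succ d ih =>
    have h_ne : ∀ {u}, G.dist r u = d + 1 → u ≠ r := by
      rintro u hu rfl
      simp at hu
    obtain ⟨u, hu_adj, hu⟩ := exists_adj_dist_eq_add_one hG (h_ne hd)
    obtain ⟨u', hu'_adj, hu'⟩ := exists_adj_dist_eq_add_one hG (h_ne (hvw.symm.trans hd))
    obtain rfl : u = u' := ih (by omega) (by omega)
    by_contra h_vw
    by_cases hur : u = r
    · have h_sub : {v, w} ⊆ G.neighborFinset u := by
        simp [insert_subset_iff, hu_adj.symm, hu'_adj.symm]
      have h_card := card_le_card h_sub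
      rw [card_pair h_vw, card_neighborFinset_eq_degree, hur] at h_card
      omega
    · obtain ⟨t, ht_adj, ht⟩ := exists_adj_dist_eq_add_one hG hur
      have h_sub : {v, w, t} ⊆ G.neighborFinset u := by
        simp [insert_subset_iff, hu_adj.symm, hu'_adj.symm, ht_adj]
      have h_card := card_le_card h_sub
      rw [card_eq_three.2 ⟨v, w, t, h_vw, by rintro rfl; omega, by rintro rfl; omega, rfl⟩,
        card_neighborFinset_eq_degree] at h_card
      exact absurd (h_two u) (by omega)

lemma nonempty_iso_pathGraph_of_degree_le_two [Fintype V] (hG : G.Connected)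
    (h_two : ∀ v, G.degree v ≤ 2) (hr : G.degree r ≤ 1) :
    Nonempty (G ≃g pathGraph (Fintype.card V)) := by
  have h_inj := dist_injective_of_degree_le_two hG h_two hr
  have h_lt : ∀ v, G.dist r v < Fintype.card V := by
    intro v
    obtain ⟨p, hp, hp_length⟩ := hG.exists_path_of_dist r v
    exact hp_length ▸ hp.length_lt
  let position : V → Fin (Fintype.card V) := fun v => ⟨G.dist r v, h_lt v⟩
  have h_bij : Function.Bijective position :=
    (Fintype.bijective_iff_injective_and_card _).2
      ⟨fun v w h => h_inj (Fin.ext_iff.1 h), (Fintype.card_fin _).symm⟩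
  have h_adj : ∀ {v w}, G.dist r w = G.dist r v + 1 → G.Adj v w := by
    intro v w h
    have hw : w ≠ r := by
      rintro rfl
      simp at h
    obtain ⟨u, hu_adj, hu⟩ := exists_adj_dist_eq_add_one hG hw
    obtain rfl : u = v := h_inj (by omega)
    exact hu_adj.symm
  refine ⟨⟨Equiv.ofBijective position h_bij, fun {v w} => ?_⟩⟩
  rw [pathGraph_adj]
  change G.dist r v + 1 = G.dist r w ∨ G.dist r w + 1 = G.dist r v ↔ G.Adj v w
  refine ⟨fun h => h.elim (fun h => h_adj h.symm) fun h => (h_adj h.symm).symm, fun h => ?_⟩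
  have h_diff := h.diff_dist_adj (u := r)
  have h_ne := h_inj.ne h.ne
  omega

end Recognition

section Isomorphism

variable {V W : Type*} [Fintype V] [Fintype W] {G : SimpleGraph V} {H : SimpleGraph W}

lemma lapApply_comp_iso (φ : G ≃g H) (f : W → ℝ) (v : V) :
    lapApply G (f ∘ φ) v = lapApply H f (φ v) := by
  rw [lapApply, lapApply, φ.degree_eq]
  congr 1
  exact sum_equiv φ.toEquiv (fun w => by simp [φ.map_adj_iff]) fun w _ => rfl

lemma IsDirichletEigenpair.comp_iso (φ : G ≃g H) {μ : ℝ} {f : W → ℝ}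
    (hf : IsDirichletEigenpair H μ f) : IsDirichletEigenpair G μ (f ∘ φ) := by
  obtain ⟨hf_ne, hf_boundary, hf_interior⟩ := hf
  refine ⟨fun h => hf_ne (φ.surjective.injective_comp_right h), fun v hv => hf_boundary _ ?_,
    fun v hv => ?_⟩
  · rwa [IsBoundary, φ.degree_eq]
  · rw [lapApply_comp_iso]
    exact hf_interior _ (by rwa [IsInterior, φ.degree_eq])

lemma dirichletLambda_eq_of_iso (φ : G ≃g H) : dirichletLambda G = dirichletLambda H :=
  congrArg sInf <| Set.ext fun _ =>
    ⟨fun ⟨_, hf⟩ => ⟨_, hf.comp_iso φ.symm⟩, fun ⟨_, hf⟩ => ⟨_, hf.comp_iso φ⟩⟩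

end Isomorphism

section Comparison

variable {V : Type*} {S : Finset V} {f : V → ℝ} {a : ℕ → ℝ}

lemma IsRearrangement.sum_fin_sq (ha : IsRearrangement S f a) :
    ∑ i : Fin (#S + 2), a i ^ 2 = ∑ v ∈ S, f v ^ 2 := by
  rw [Fin.sum_univ_eq_sum_range fun i => a i ^ 2, sum_range_succ, sum_range_succ', ha.1, ha.2.1,
    ← ha.2.2 fun x => x ^ 2]
  ring

lemma IsRearrangement.dirichletLambda_pathGraph_mul_le (hS : S.Nonempty)
    (ha : IsRearrangement S f a) :
    dirichletLambda (pathGraph (#S + 2)) * ∑ v ∈ S, f v ^ 2 ≤ pathEnergy (#S + 1) a := by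
  have h_path := isTreeWithBoundary_pathGraph hS.card_pos
  rw [← quadForm_pathGraph, ← ha.sum_fin_sq]
  refine dirichletLambda_mul_le_quadForm h_path.1.connected h_path.2.1 fun i hi => ?_
  have h_end : i.val = 0 ∨ i.val = #S + 1 := by
    have h_not := mt isInterior_pathGraph_iff.2 (fun h => h.not_isBoundary hi)
    omega
  rcases h_end with h | h <;> rw [h]
  exacts [ha.1, ha.2.1]

variable [Fintype V] {G : SimpleGraph V}

theorem exists_pos_dirichletLambda_pathGraph_add_le (hG : IsTreeWithBoundary G) :
    ∃ c > 0, dirichletLambda (pathGraph (#(interiorFinset G) + 2)) +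
      c * ∑ v ∈ interiorFinset G, ((G.degree v : ℝ) - 2) ≤ dirichletLambda G := by
  obtain ⟨h_tree, hI, -⟩ := hG
  have hS : (interiorFinset G).Nonempty := hI.imp fun v hv => mem_interiorFinset.2 hv
  obtain ⟨f, hf, hf_pos⟩ := exists_pos_isDirichletEigenpair_dirichletLambda h_tree.connected hI
  have hf_out : ∀ v ∉ interiorFinset G, f v = 0 := fun v hv => hf.2.1 v <|
    (isBoundary_or_isInterior h_tree.connected hI v).resolve_right (hv ∘ mem_interiorFinset.2)
  have hf_nonneg : 0 ≤ f := fun v =>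
    if hv : v ∈ interiorFinset G then (hf_pos v (mem_interiorFinset.1 hv)).le
    else (hf_out v hv).ge
  obtain ⟨a, ha, ha_least, ha_energy⟩ := exists_isRearrangement_pathEnergy_add_le
    h_tree.isAcyclic (S := interiorFinset G) (fun v hv => mem_interiorFinset.1 hv) hf_nonneg hf_out
  obtain ⟨u, hu, hu_eq⟩ := (ha_least hS).1
  have ha_one : 0 < a 1 := hu_eq ▸ hf_pos u (mem_interiorFinset.1 hu)
  have h_norm : ∑ v, f v ^ 2 = ∑ v ∈ interiorFinset G, f v ^ 2 :=
    (sum_subset (subset_univ _) fun v _ hv => by rw [hf_out v hv, zero_pow two_ne_zero]).symm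
  have h_norm_pos : 0 < ∑ v ∈ interiorFinset G, f v ^ 2 :=
    sum_pos (fun v hv => pow_pos (hf_pos v (mem_interiorFinset.1 hv)) 2) hS
  rw [(isDirichletEigenpair_dirichletLambda_iff h_tree.connected hI hf.1 hf.2.1).1 hf,
    h_norm] at ha_energy
  refine ⟨a 1 ^ 2 / ∑ v ∈ interiorFinset G, f v ^ 2, by positivity, ?_⟩
  refine le_of_mul_le_mul_right ?_ h_norm_pos
  rw [add_mul, mul_right_comm, div_mul_cancel₀ _ h_norm_pos.ne']
  linarith [ha.dirichletLambda_pathGraph_mul_le hS]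

theorem dirichletLambda_pathGraph_le (hG : IsTreeWithBoundary G) :
    dirichletLambda (pathGraph (#(interiorFinset G) + 2)) ≤ dirichletLambda G := by
  obtain ⟨c, hc, h⟩ := exists_pos_dirichletLambda_pathGraph_add_le hG
  have h_excess : 0 ≤ ∑ v ∈ interiorFinset G, ((G.degree v : ℝ) - 2) :=
    sum_nonneg fun v hv => (mem_interiorFinset.1 hv).degree_sub_two_nonneg
  linarith [mul_nonneg hc.le h_excess]

lemma degree_eq_two_of_dirichletLambda_le (hG : IsTreeWithBoundary G)
    (h : dirichletLambda G ≤ dirichletLambda (pathGraph (#(interiorFinset G) + 2))) {v : V}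
    (hv : IsInterior G v) : G.degree v = 2 := by
  obtain ⟨c, hc, h_le⟩ := exists_pos_dirichletLambda_pathGraph_add_le hG
  have h_excess : ∀ u ∈ interiorFinset G, 0 ≤ (G.degree u : ℝ) - 2 := fun u hu =>
    (mem_interiorFinset.1 hu).degree_sub_two_nonneg
  have h_sum : ∑ u ∈ interiorFinset G, ((G.degree u : ℝ) - 2) = 0 :=
    (nonpos_of_mul_nonpos_right (by linarith) hc).antisymm (sum_nonneg h_excess)
  have h_zero := (sum_eq_zero_iff_of_nonneg h_excess).1 h_sum v (mem_interiorFinset.2 hv)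
  exact_mod_cast sub_eq_zero.1 h_zero

lemma IsTreeWithBoundary.card_eq_card_interiorFinset_add_two (hG : IsTreeWithBoundary G)
    (h : ∀ v, IsInterior G v → G.degree v = 2) : Fintype.card V = #(interiorFinset G) + 2 := by
  have h_sum := sum_degree_eq_card_add_card_interiorFinset
    (isBoundary_or_isInterior hG.1.connected hG.2.1) h
  rw [sum_degrees_eq_twice_card_edges] at h_sum
  have h_edges := hG.1.card_edgeFinset
  omega

theorem nonempty_iso_pathGraph_of_dirichletLambda_le (hG : IsTreeWithBoundary G)
    (h : dirichletLambda G ≤ dirichletLambda (pathGraph (#(interiorFinset G) + 2))) :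
    Nonempty (G ≃g pathGraph (#(interiorFinset G) + 2)) := by
  have h_degree : ∀ v, IsInterior G v → G.degree v = 2 := fun v =>
    degree_eq_two_of_dirichletLambda_le hG h
  obtain ⟨r, hr⟩ := hG.2.2
  rw [← hG.card_eq_card_interiorFinset_add_two h_degree]
  refine nonempty_iso_pathGraph_of_degree_le_two hG.1.connected (fun v => ?_) hr.le
  exact not_lt.1 fun hv => hv.ne' (h_degree v hv.le)

end Comparison

/-- **Theorem.** A tree `G` has the Faber-Krahn property in the class
`T^(·,k)` of all trees with boundary with exactly `k` interior vertices
(arbitrary total number of vertices) if and only if `G` is a path with `k + 2`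
vertices; `G` is then uniquely determined up to isomorphism. -/
theorem faberKrahn_fixedInterior (k : ℕ) (hk : 1 ≤ k)
    {V : Type} [Fintype V] [DecidableEq V]
    (G : SimpleGraph V) (hG : IsTreeWithBoundary G)
    (hGk : (interiorFinset G).card = k) :
    (∀ (m : ℕ) (G' : SimpleGraph (Fin m)), IsTreeWithBoundary G' →
        (interiorFinset G').card = k →
        dirichletLambda G ≤ dirichletLambda G')
      ↔ Nonempty (G ≃g SimpleGraph.pathGraph (k + 2)) := by
  constructor
  · intro h_min
    have h_path := h_min _ _ (isTreeWithBoundary_pathGraph hk) (card_interiorFinset_pathGraph k)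
    subst hGk
    exact nonempty_iso_pathGraph_of_dirichletLambda_le hG h_path
  · rintro ⟨φ⟩ m G' hG' hG'k
    calc dirichletLambda G = dirichletLambda (pathGraph (k + 2)) := dirichletLambda_eq_of_iso φ
      _ ≤ dirichletLambda G' := hG'k ▸ dirichletLambda_pathGraph_le hG'

end FK
end
end

section
/- For every degree sequence π of a tree with boundary, the class T_π contains an SLO*-tree, and this SLO*-tree is uniquely determined up to isomorphism (any two SLO*-trees in T_π are isomorphic). -/
/-!
A rooted tree whose vertices are linearly ordered so that parents precede their children is encoded
by its parent function `p`. Conditions (S1) and (S2) together say that `p` is monotone, and (S3) and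
(S4) together say that the degrees are sorted, where the degree `1` counts as larger than all
others. The size of each fibre of `p` is the number of children of a vertex, hence is given by its
degree, and a monotone map between finite linear orders is determined by its fibre sizes, which can
be prescribed arbitrarily. So the sorted degree sequence determines the tree, and conversely it
determines a monotone map `p`. It remains to see that `p v < v` for every `v` other than the root.
Because the leaves come last, the range of `p` is an initial segment. If `v ≤ p v`, then `p` maps
the set of all `w` with `p w < v`, which lie before `v`, onto the set of all vertices before `v`,
hence injectively. This is absurd since the root and its first child both go to the root.
-/


/-!
Common definitions for Faber-Krahn type inequalities for trees
(Bıyıkoğlu–Leydold, "Faber-Krahn Type Inequalities for Trees").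

A *tree (graph) with boundary* is a finite simple connected graph in which
boundary vertices are exactly the vertices of degree 1 and interior vertices
are the vertices of degree ≥ 2; both sets are required to be nonempty.
The Dirichlet operator is the Laplacian restricted to functions vanishing on
the boundary; `dirichletLambda` is its smallest eigenvalue.
-/

open Finset
open scoped Classical

noncomputable section

namespace FK

/-! ### Monotone maps and finite linear orders -/

lemma exists_linearOrder_monotone {α β : Type*} [LinearOrder β] (f : α → β) :
    ∃ _ : LinearOrder α, Monotone f := by
  obtain ⟨_, -⟩ := exists_wellFoundedLT α
  let g : α → β ×ₗ α := fun a => toLex (f a, a)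
  have hg : Function.Injective g := fun a b h => congrArg (fun x => (ofLex x).2) h
  exact ⟨LinearOrder.lift' g hg, fun a b (h : g a ≤ g b) => Prod.Lex.monotone_fst _ _ h⟩

lemma nonempty_orderIso_of_card_eq {α β : Type*} [LinearOrder α] [LinearOrder β] [Fintype α]
    [Fintype β] (h : Fintype.card α = Fintype.card β) : Nonempty (α ≃o β) :=
  ⟨(monoEquivOfFin α h).symm.trans (monoEquivOfFin β rfl)⟩

lemma exists_monotone_card_fiber_eq {α β : Type*} [LinearOrder α] [LinearOrder β] [Fintype α]
    [Fintype β] (k : β → ℕ) (hk : ∑ b, k b = Fintype.card α) :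
    ∃ f : α → β, Monotone f ∧ ∀ b, #{a | f a = b} = k b := by
  obtain ⟨e⟩ := nonempty_orderIso_of_card_eq (α := α) (β := Σₗ b, Fin (k b)) (by
    simp [Lex, ← hk])
  refine ⟨fun a => (ofLex (e a)).1, fun a b h => ?_, fun b => ?_⟩
  · exact ((Sigma.Lex.le_def).1 (e.monotone h)).elim le_of_lt fun h => h.1.le
  · rw [← Fintype.card_subtype, ← Fintype.card_fin (k b)]
    exact Fintype.card_congr <|
      (e.toEquiv.trans ofLex).subtypeEquiv (fun _ => Iff.rfl) |>.trans (Equiv.sigmaSubtype b)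

lemma eq_of_monotone_of_map_univ_eq {α β : Type*} [LinearOrder α] [Fintype α] [PartialOrder β]
    {f g : α → β} (hf : Monotone f) (hg : Monotone g)
    (h : univ.val.map f = univ.val.map g) : f = g := by
  let e := monoEquivOfFin α rfl
  suffices f ∘ e = g ∘ e from e.surjective.injective_comp_right this
  have hperm : (List.ofFn (f ∘ e)).Perm (List.ofFn (g ∘ e)) := by
    rwa [← Multiset.coe_eq_coe, ← Fin.univ_val_map, ← Fin.univ_val_map, ← Multiset.map_map,
      ← Multiset.map_map, ← e.coe_toEquiv, Multiset.map_univ_val_equiv]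
  exact List.ofFn_injective <| hperm.eq_of_pairwise'
    (hf.comp e.monotone).sortedLE_ofFn.pairwise (hg.comp e.monotone).sortedLE_ofFn.pairwise

/-! ### Sorting degrees -/

/-- The position of a degree in the order imposed on degree sequences by (S3) and (S4): interior
degrees in increasing order, the boundary degree `1` last. -/
def degKey (d : ℕ) : ℕ∞ := if d = 1 then ⊤ else d

lemma degKey_injective : Function.Injective degKey := by
  intro a b h
  unfold degKey at h
  split_ifs at h <;> simp_all

lemma degKey_le_iff {a b : ℕ} : degKey a ≤ degKey b ↔ b = 1 ∨ (a ≠ 1 ∧ a ≤ b) := by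
  unfold degKey
  split_ifs <;> simp_all

/-! ### Rooted trees and their parent functions -/

lemma existsUnique_isChild {V : Type*} {G : SimpleGraph V} (hG : G.IsTree) {v₀ v : V}
    (hv : v ≠ v₀) : ∃! u, IsChild G v₀ u v := by
  obtain ⟨q, hq, hlen⟩ := hG.connected.exists_path_of_dist v₀ v
  have hadj : G.Adj q.penultimate v := q.adj_penultimate fun h => hv h.eq.symm
  refine ⟨q.penultimate, ⟨hadj, ?_⟩, fun u hu => ?_⟩
  · have hdrop := G.dist_le q.dropLast
    have := hadj.diff_dist_adj (u := v₀)
    simp only [SimpleGraph.Walk.length_dropLast] at hdrop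
    have := hG.dist_ne_of_adj v₀ hadj
    omega
  · obtain ⟨r, hrlen⟩ := hG.connected.exists_walk_length_eq_dist v₀ u
    have hconcat : (r.concat hu.1).IsPath :=
      SimpleGraph.Walk.isPath_of_length_eq_dist _ (by simp [hrlen, hu.2])
    have := (hG.isAcyclic.subsingleton_path v₀ v).elim ⟨_, hconcat⟩ ⟨q, hq⟩
    simpa using congrArg (fun w : G.Path v₀ v => w.1.penultimate) this

/-- The graph in which every `w` is joined to its parent `p w`. The root is encoded as a fixed
point of `p`, and `SimpleGraph.fromRel` drops the resulting loop. -/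
def parentGraph {V : Type*} (p : V → V) : SimpleGraph V := SimpleGraph.fromRel fun v w => p w = v

lemma parentGraph_adj {V : Type*} {p : V → V} {v w : V} :
    (parentGraph p).Adj v w ↔ v ≠ w ∧ (p w = v ∨ p v = w) := Iff.rfl

lemma parentGraph_eq_of_isChild {V : Type*} {G : SimpleGraph V} (hG : G.IsTree) {v₀ : V}
    {p : V → V} (hroot : p v₀ = v₀) (hp : ∀ v ≠ v₀, IsChild G v₀ (p v) v) : parentGraph p = G := by
  have hadj_of_parent : ∀ {v w}, v ≠ w → p w = v → G.Adj v w := by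
    rintro _ w hne rfl
    exact (hp w fun h => hne (by rw [h, hroot])).1
  have hparent_of_isChild : ∀ {v w}, IsChild G v₀ v w → p w = v := fun {v w} h =>
    have hw : w ≠ v₀ := by rintro rfl; simpa using h.2
    (existsUnique_isChild hG hw).unique (hp w hw) h
  ext v w
  rw [parentGraph_adj]
  refine ⟨fun ⟨hne, h⟩ => ?_, fun h => ⟨h.ne, ?_⟩⟩
  · exact h.elim (hadj_of_parent hne) fun h => (hadj_of_parent hne.symm h).symm
  · exact (hG.dist_eq_dist_add_one_of_adj v₀ h).symm.imp
      (fun hd => hparent_of_isChild ⟨h, hd⟩) fun hd => hparent_of_isChild ⟨h.symm, hd⟩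

/-- An equivalence that intertwines two parent functions is an isomorphism of their graphs. -/
def parentGraphIso {V W : Type*} {p : V → V} {q : W → W} (e : V ≃ W)
    (h : ∀ v, e (p v) = q (e v)) : parentGraph p ≃g parentGraph q where
  toEquiv := e
  map_rel_iff' := by simp [parentGraph_adj, ← h]

/-- `p` is the parent function of a tree whose vertices are ordered in such a way that parents
precede their children. The root `⊥` counts as its own parent. -/
structure IsParentFun {V : Type*} [LinearOrder V] [OrderBot V] (p : V → V) : Prop where
  map_bot : p ⊥ = ⊥
  lt : ∀ v ≠ ⊥, p v < v

lemma isParentFun_of_monotone {V : Type*} [LinearOrder V] [OrderBot V] [Finite V] {p : V → V}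
    (hp : Monotone p) (hrange : IsLowerSet (Set.range p)) (hroot : ∃ v ≠ ⊥, p v = ⊥) :
    IsParentFun p := by
  have := Fintype.ofFinite V
  obtain ⟨u, hu, hpu⟩ := hroot
  have hpbot : p ⊥ = ⊥ := le_bot_iff.1 ((hp bot_le).trans_eq hpu)
  refine ⟨hpbot, fun v hv => ?_⟩
  by_contra! hvp
  have hinj : Set.InjOn p ({w | p w < v} : Finset V) := by
    refine injOn_of_surjOn_of_card_le (t := {w | w < v}) p (fun w hw => by simpa using hw)
      (fun x hx => ?_) (card_le_card fun w hw => ?_)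
    · have hxv : x < v := (mem_filter_univ x).1 hx
      obtain ⟨w, rfl⟩ := hrange (hxv.le.trans hvp) ⟨v, rfl⟩
      exact ⟨w, by simpa using hxv, rfl⟩
    · rw [mem_filter_univ] at hw ⊢
      exact hp.reflect_lt (hw.trans_le hvp)
  have hbotv : ⊥ < v := bot_lt_iff_ne_bot.2 hv
  exact hu (hinj (by simpa [hpu] using hbotv) (by simpa [hpbot] using hbotv)
    (hpu.trans hpbot.symm))

namespace IsParentFun

variable {V : Type*} [LinearOrder V] [OrderBot V] {p : V → V}

lemma le (hp : IsParentFun p) (v : V) : p v ≤ v := by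
  obtain rfl | hv := eq_or_ne v ⊥
  · exact hp.map_bot.le
  · exact (hp.lt v hv).le

lemma adj (hp : IsParentFun p) {v : V} (hv : v ≠ ⊥) : (parentGraph p).Adj (p v) v :=
  ⟨(hp.lt v hv).ne, Or.inl rfl⟩

section Fintype

variable [Fintype V]

lemma neighborFinset_bot (hp : IsParentFun p) :
    (parentGraph p).neighborFinset ⊥ = ({w | p w = ⊥} : Finset V).erase ⊥ := by
  ext w
  simp only [SimpleGraph.mem_neighborFinset, parentGraph_adj, hp.map_bot, mem_erase,
    mem_filter_univ]
  tauto

lemma neighborFinset_of_ne_bot (hp : IsParentFun p) {v : V} (hv : v ≠ ⊥) :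
    (parentGraph p).neighborFinset v = insert (p v) ({w | p w = v} : Finset V) := by
  have hlt := hp.lt v hv
  ext w
  simp only [SimpleGraph.mem_neighborFinset, parentGraph_adj, mem_insert, mem_filter_univ]
  constructor
  · tauto
  · rintro (rfl | rfl)
    · exact ⟨hlt.ne', Or.inr rfl⟩
    · exact ⟨fun h => hlt.ne (congrArg p h), Or.inl rfl⟩

/-- The correction at the root accounts for its missing parent and for its membership in its own
fibre. -/
lemma card_fiber_add_one (hp : IsParentFun p) (v : V) :
    #{w | p w = v} + 1 = (parentGraph p).degree v + if v = ⊥ then 2 else 0 := by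
  rw [← SimpleGraph.card_neighborFinset_eq_degree]
  split_ifs with hv
  · subst hv
    rw [hp.neighborFinset_bot, ← card_erase_add_one (a := ⊥) (by simp [hp.map_bot])]
  · have hpv : p v ∉ ({w | p w = v} : Finset V) := by
      simpa using ((hp.le (p v)).trans_lt (hp.lt v hv)).ne
    rw [hp.neighborFinset_of_ne_bot hv, card_insert_of_notMem hpv, add_zero]

lemma sum_degree (hp : IsParentFun p) :
    ∑ v, (parentGraph p).degree v + 2 = 2 * Fintype.card V := by
  calc ∑ v, (parentGraph p).degree v + 2
      = ∑ v, ((parentGraph p).degree v + if v = ⊥ then 2 else 0) := by simp [sum_add_distrib]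
    _ = ∑ v, (#{w | p w = v} + 1) := by simp only [hp.card_fiber_add_one]
    _ = 2 * Fintype.card V := by
      rw [sum_add_distrib, ← card_eq_sum_card_fiberwise fun _ _ => mem_univ _]
      simp [two_mul]

end Fintype

variable [Finite V]

lemma connected (hp : IsParentFun p) : (parentGraph p).Connected := by
  have hreach (v : V) : (parentGraph p).Reachable ⊥ v := by
    induction v using WellFoundedLT.induction with
    | _ v ih =>
      obtain rfl | hv := eq_or_ne v ⊥
      · exact .rfl
      · exact (ih _ (hp.lt v hv)).trans (hp.adj hv).reachable
  exact ⟨fun v w => (hreach v).symm.trans (hreach w)⟩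

lemma isTree (hp : IsParentFun p) : (parentGraph p).IsTree := by
  have := Fintype.ofFinite V
  rw [SimpleGraph.isTree_iff_connected_and_card]
  refine ⟨hp.connected, ?_⟩
  have hsum := hp.sum_degree
  rw [SimpleGraph.sum_degrees_eq_twice_card_edges] at hsum
  rw [Nat.card_eq_fintype_card, Nat.card_eq_fintype_card, ← SimpleGraph.edgeFinset_card]
  omega

/-- By downward induction along the order, the neighbour of `v` closer to the root is not one of the
children of `v`. -/
lemma isChild (hp : IsParentFun p) {v : V} (hv : v ≠ ⊥) : IsChild (parentGraph p) ⊥ (p v) v := by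
  induction v using WellFoundedGT.induction with
  | _ v ih =>
    obtain ⟨u, hu, -⟩ := existsUnique_isChild hp.isTree hv
    obtain ⟨hne, rfl | rfl⟩ := parentGraph_adj.1 hu.1
    · exact hu
    · have hlt : p u < u := (hp.le u).lt_of_ne hne.symm
      have := (ih u hlt hlt.ne_bot).2
      have := hu.2
      omega

lemma isChild_iff (hp : IsParentFun p) {v w : V} :
    IsChild (parentGraph p) ⊥ v w ↔ w ≠ ⊥ ∧ p w = v := by
  constructor
  · intro h
    have hw : w ≠ ⊥ := by rintro rfl; simpa using h.2
    exact ⟨hw, (existsUnique_isChild hp.isTree hw).unique (hp.isChild hw) h⟩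
  · rintro ⟨hw, rfl⟩
    exact hp.isChild hw

lemma monotone_dist (hp : IsParentFun p) (hmono : Monotone p) :
    Monotone ((parentGraph p).dist ⊥) := by
  intro v w hvw
  induction w using WellFoundedLT.induction generalizing v with
  | _ w ih =>
    obtain rfl | hv := eq_or_ne v ⊥
    · simp
    · have hw : w ≠ ⊥ := ne_bot_of_le_ne_bot hv hvw
      rw [(hp.isChild hv).2, (hp.isChild hw).2]
      exact Nat.succ_le_succ (ih _ (hp.lt w hw) (hmono hvw))

end IsParentFun

/-! ### SLO*-orderings and monotone parent functions -/

section

variable {V W : Type*} [LinearOrder V] [OrderBot V] [Fintype V]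

lemma isSLOStarOrdering_parentGraph {p : V → V} (hp : IsParentFun p) (hmono : Monotone p)
    (hdeg : Monotone fun v => degKey ((parentGraph p).degree v)) :
    IsSLOStarOrdering (parentGraph p) ⊥ (· < ·) := by
  have hkey {v w : V} (h : v < w) := degKey_le_iff.1 (hdeg h.le)
  refine ⟨⟨inferInstance, fun v w h => hp.monotone_dist hmono h.le, ?_, ?_⟩, ?_⟩
  · intro v₁ v₂ w₁ w₂ h h₁ h₂
    rw [hp.isChild_iff] at h₁ h₂
    exact hmono.reflect_lt (by rwa [h₁.2, h₂.2])
  · exact fun v w h hv => (hkey h).resolve_right fun h' => h'.1 hv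
  · intro v w h _ hw
    exact ((hkey h).resolve_left (Nat.ne_of_gt hw)).2

lemma exists_parentGraph_eq_of_isSLOOrdering {G : SimpleGraph V} (hG : G.IsTree)
    (h : IsSLOOrdering G ⊥ (· < ·)) :
    ∃ p : V → V, IsParentFun p ∧ Monotone p ∧ parentGraph p = G := by
  obtain ⟨-, hdist, hchild, -⟩ := h
  have hparent (v : V) : ∃ u, (v = ⊥ → u = ⊥) ∧ (v ≠ ⊥ → IsChild G ⊥ u v) := by
    obtain rfl | hv := eq_or_ne v ⊥
    · exact ⟨⊥, by simp⟩
    · obtain ⟨u, hu, -⟩ := existsUnique_isChild hG hv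
      exact ⟨u, fun h => absurd h hv, fun _ => hu⟩
  choose p hroot hp using hparent
  refine ⟨p, ⟨hroot ⊥ rfl, fun v hv => ?_⟩, fun v w hvw => ?_,
    parentGraph_eq_of_isChild hG (hroot ⊥ rfl) hp⟩
  · refine ((hp v hv).1.ne.lt_or_gt).resolve_right fun hlt => ?_
    have := hdist _ _ hlt
    have := (hp v hv).2
    omega
  · obtain rfl | hv := eq_or_ne v ⊥
    · simp [hroot]
    · by_contra! hlt
      exact hvw.not_gt (hchild _ _ _ _ hlt (hp w (ne_bot_of_le_ne_bot hv hvw)) (hp v hv))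

lemma IsParentFun.apply_comm_of_degree_eq [LinearOrder W] [OrderBot W] [Fintype W] {p : V → V}
    {q : W → W} (hp : IsParentFun p) (hq : IsParentFun q) (hpmono : Monotone p)
    (hqmono : Monotone q) (e : V ≃o W)
    (hdeg : ∀ v, (parentGraph p).degree v = (parentGraph q).degree (e v)) (v : V) :
    e (p v) = q (e v) := by
  have hfiber (v : V) : #{u | p u = v} = #{w | q w = e v} := by
    have hpv := hp.card_fiber_add_one v
    have hqv := hq.card_fiber_add_one (e v)
    simp only [hdeg, ← e.map_bot, e.injective.eq_iff] at hpv hqv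
    omega
  refine congrFun (eq_of_monotone_of_map_univ_eq (e.monotone.comp hpmono)
    (hqmono.comp e.monotone) ?_) v
  rw [← Multiset.map_map q e, ← e.coe_toEquiv, Multiset.map_univ_val_equiv]
  ext w
  obtain ⟨v, rfl⟩ := e.surjective w
  simpa [Multiset.count_map, eq_comm, Finset.card] using hfiber v

lemma isParentFun_of_card_fiber_add_one {d : V → ℕ} (hpos : ∀ v, 1 ≤ d v)
    (hmono : Monotone fun v => degKey (d v)) {p : V → V} (hp : Monotone p)
    (hfiber : ∀ v, #{w | p w = v} + 1 = d v + if v = ⊥ then 2 else 0) : IsParentFun p := by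
  have mem_range_iff (v : V) : v ∈ Set.range p ↔ v = ⊥ ∨ 2 ≤ d v := by
    have hmem : v ∈ Set.range p ↔ 0 < #{w | p w = v} := by simp [card_pos, Finset.Nonempty]
    have hcard := hfiber v
    have hdv := hpos v
    rw [hmem]
    split_ifs at hcard with hv
    · simp only [hv, true_or, iff_true] at hcard hdv ⊢
      omega
    · simp only [hv, false_or]
      omega
  refine isParentFun_of_monotone hp (fun v u huv hv => ?_) ?_
  · rw [mem_range_iff] at hv ⊢
    refine or_iff_not_imp_left.2 fun hu => ?_
    have hdv := hv.resolve_left (ne_bot_of_le_ne_bot hu huv)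
    have := degKey_le_iff.1 (hmono huv)
    have := hpos u
    omega
  · have hcard : 1 < #{v | p v = ⊥} := by
      have hbot := hfiber ⊥
      have := hpos ⊥
      rw [if_pos rfl] at hbot
      omega
    obtain ⟨v, hv, hne⟩ := exists_mem_ne hcard ⊥
    exact ⟨v, hne, (mem_filter_univ v).1 hv⟩

lemma exists_parentFun_degree_eq {d : V → ℕ} (hpos : ∀ v, 1 ≤ d v)
    (hsum : ∑ v, d v + 2 = 2 * Fintype.card V) (hmono : Monotone fun v => degKey (d v)) :
    ∃ p : V → V, IsParentFun p ∧ Monotone p ∧ ∀ v, (parentGraph p).degree v = d v := by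
  let k : V → ℕ := fun v => d v + (if v = ⊥ then 2 else 0) - 1
  have hk (v : V) : k v + 1 = d v + if v = ⊥ then 2 else 0 :=
    Nat.sub_add_cancel ((hpos v).trans (Nat.le_add_right _ _))
  have hksum : ∑ v, k v = Fintype.card V := by
    have : ∑ v, k v + Fintype.card V = ∑ v, d v + 2 := by
      calc ∑ v, k v + Fintype.card V = ∑ v, (k v + 1) := by simp [sum_add_distrib]
        _ = ∑ v, (d v + if v = ⊥ then 2 else 0) := by simp only [hk]
        _ = ∑ v, d v + 2 := by simp [sum_add_distrib]
    omega
  obtain ⟨p, hp, hcard⟩ := exists_monotone_card_fiber_eq k hksum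
  have hfiber (v : V) : #{w | p w = v} + 1 = d v + if v = ⊥ then 2 else 0 := by rw [hcard, hk]
  have hpar := isParentFun_of_card_fiber_add_one hpos hmono hp hfiber
  exact ⟨p, hpar, hp, fun v => by simpa using (hpar.card_fiber_add_one v).symm.trans (hfiber v)⟩

end

/-! ### Existence and uniqueness -/

section

variable {V W : Type*} [Fintype V] [Fintype W] {G : SimpleGraph V} {H : SimpleGraph W}

lemma IsTreeWithBoundary.one_le_degree (hG : IsTreeWithBoundary G) (v : V) : 1 ≤ G.degree v := by
  obtain ⟨u, hu⟩ := hG.2.1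
  obtain ⟨w, huw⟩ := (G.degree_pos_iff_exists_adj u).1 (two_pos.trans_le hu)
  have : Nontrivial V := ⟨u, w, huw.ne⟩
  exact hG.1.connected.preconnected.degree_pos_of_nontrivial v

lemma IsTreeWithBoundary.sum_degree (hG : IsTreeWithBoundary G) :
    ∑ v, G.degree v + 2 = 2 * Fintype.card V := by
  rw [G.sum_degrees_eq_twice_card_edges, ← hG.1.card_edgeFinset]
  ring

lemma IsTreeWithBoundary.monotone_degKey_of_isSLOStarOrdering [LinearOrder V]
    (hG : IsTreeWithBoundary G) {v₀ : V} (h : IsSLOStarOrdering G v₀ (· < ·)) :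
    Monotone fun v => degKey (G.degree v) := by
  refine monotone_iff_forall_lt.2 fun v w hvw => degKey_le_iff.2 ?_
  have hboundary := h.1.2.2.2 v w hvw
  have hinterior := h.2 v w hvw
  have hv := hG.one_le_degree v
  have hw := hG.one_le_degree w
  simp only [IsBoundary, IsInterior] at hboundary hinterior
  omega

lemma IsSLOStarTree.exists_linearOrder (hG : IsSLOStarTree G) :
    ∃ (_ : LinearOrder V) (_ : OrderBot V), IsSLOStarOrdering G ⊥ (· < ·) := by
  obtain ⟨hT, v₀, lt, h⟩ := hG
  have := h.1.1
  let _ : LinearOrder V := linearOrderOfSTO lt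
  have hle (v : V) : v₀ ≤ v := by
    by_contra! hlt
    have hdist := h.1.2.1 v v₀ hlt
    rw [SimpleGraph.dist_self, Nat.le_zero, hT.1.connected.dist_eq_zero_iff] at hdist
    exact hlt.ne' hdist
  exact ⟨inferInstance, { bot := v₀, bot_le := hle }, h⟩

lemma IsTreeWithBoundary.exists_isSLOStarTree_degree_eq (hG : IsTreeWithBoundary G) :
    ∃ H : SimpleGraph V, IsSLOStarTree H ∧ ∀ v, H.degree v = G.degree v := by
  obtain ⟨_, hmono⟩ := exists_linearOrder_monotone fun v => degKey (G.degree v)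
  have : Nonempty V := hG.1.connected.nonempty
  let _ : OrderBot V := WellFoundedLT.toOrderBot V
  obtain ⟨p, hp, hpmono, hdeg⟩ :=
    exists_parentFun_degree_eq hG.one_le_degree hG.sum_degree hmono
  refine ⟨parentGraph p, ⟨⟨hp.isTree, ?_⟩, ⊥, (· < ·),
    isSLOStarOrdering_parentGraph hp hpmono (by simpa only [hdeg])⟩, hdeg⟩
  simpa only [IsInterior, IsBoundary, hdeg] using hG.2

lemma card_degreeMultiset : Multiset.card (degreeMultiset G) = Fintype.card V := by
  simp [degreeMultiset]

lemma degree_eq_of_degreeMultiset_eq [LinearOrder V] [LinearOrder W]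
    (hG : Monotone fun v => degKey (G.degree v)) (hH : Monotone fun w => degKey (H.degree w))
    (h : degreeMultiset G = degreeMultiset H) (e : V ≃o W) (v : V) :
    G.degree v = H.degree (e v) := by
  refine degKey_injective (congrFun (eq_of_monotone_of_map_univ_eq hG (hH.comp e.monotone) ?_) v)
  rw [← Multiset.map_map _ e, ← e.coe_toEquiv, Multiset.map_univ_val_equiv]
  simpa only [degreeMultiset, Multiset.map_map, Function.comp_def] using
    congrArg (Multiset.map degKey) h

lemma IsSLOStarTree.nonempty_iso (hG : IsSLOStarTree G) (hH : IsSLOStarTree H)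
    (h : degreeMultiset G = degreeMultiset H) : Nonempty (G ≃g H) := by
  obtain ⟨_, _, hGord⟩ := hG.exists_linearOrder
  obtain ⟨_, _, hHord⟩ := hH.exists_linearOrder
  obtain ⟨e⟩ : Nonempty (V ≃o W) := nonempty_orderIso_of_card_eq (by
    rw [← card_degreeMultiset (G := G), h, card_degreeMultiset])
  have hdeg := degree_eq_of_degreeMultiset_eq
    (hG.1.monotone_degKey_of_isSLOStarOrdering hGord)
    (hH.1.monotone_degKey_of_isSLOStarOrdering hHord) h e
  obtain ⟨p, hp, hpmono, rfl⟩ := exists_parentGraph_eq_of_isSLOOrdering hG.1.1 hGord.1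
  obtain ⟨q, hq, hqmono, rfl⟩ := exists_parentGraph_eq_of_isSLOOrdering hH.1.1 hHord.1
  exact ⟨parentGraphIso e.toEquiv (hp.apply_comm_of_degree_eq hq hpmono hqmono e hdeg)⟩

end

/-- **Lemma.** For every degree sequence `π` of a tree with boundary, the class
`T_π` contains an SLO*-tree, and any two SLO*-trees in `T_π` are isomorphic. -/
theorem exists_unique_SLOStarTree (π : Multiset ℕ)
    (hπ : ∃ G : SimpleGraph (Fin (Multiset.card π)),
      IsTreeWithBoundary G ∧ degreeMultiset G = π) :
    (∃ G : SimpleGraph (Fin (Multiset.card π)),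
        IsTreeWithBoundary G ∧ degreeMultiset G = π ∧ IsSLOStarTree G) ∧
    (∀ (V₁ V₂ : Type) [Fintype V₁] [DecidableEq V₁] [Fintype V₂] [DecidableEq V₂]
        (G₁ : SimpleGraph V₁) (G₂ : SimpleGraph V₂),
        IsTreeWithBoundary G₁ → degreeMultiset G₁ = π → IsSLOStarTree G₁ →
        IsTreeWithBoundary G₂ → degreeMultiset G₂ = π → IsSLOStarTree G₂ →
        Nonempty (G₁ ≃g G₂)) := by
  constructor
  · obtain ⟨G, hG, hπ⟩ := hπ
    obtain ⟨H, hH, hdeg⟩ := hG.exists_isSLOStarTree_degree_eq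
    exact ⟨H, hH.1, by simpa only [degreeMultiset, hdeg] using hπ, hH⟩
  · intro V₁ V₂ _ _ _ _ G₁ G₂ _ hπ₁ h₁ _ hπ₂ h₂
    exact h₁.nonempty_iso h₂ (hπ₁.trans hπ₂.symm)

end FK
end
end
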